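/- Let E be a lattice effect algebra and define x·y := ((x'∧y)⊕y')' for all x,y ∈ E. Then for all a, b, c ∈ E: [(a·b')'·b']'·c = [((a·c)·(b·c)')'·(b·c)']' (i.e., the identity (NG7) holds in (E;·,',0,1)). -/

import Mathlib

/-- An effect algebra: a partial algebra (E;⊕,',0,1). The partial operation ⊕ is
modeled by a definedness predicate `D` together with a total function `add` whose
value is only meaningful on defined pairs. -/
structure EffectAlgebra (E : Type*) where
  /-- definedness of `x ⊕ y` -/
  D : E → E → Prop
  /-- the value of `x ⊕ y` (meaningful only when `D x y`) -/
  add : E → E → E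
  zero : E
  one : E
  /-- the complement `x'` -/
  compl : E → E
  /-- (E1) commutativity -/
  E1 : ∀ x y, D x y → D y x ∧ add x y = add y x
  /-- (E2) associativity -/
  E2 : ∀ x y z, D x y → D (add x y) z →
    D y z ∧ D x (add y z) ∧ add (add x y) z = add x (add y z)
  /-- (E3) existence of the complement -/
  E3a : ∀ x, D x (compl x)
  E3b : ∀ x, add x (compl x) = one
  /-- (E3) uniqueness of the complement -/
  E3c : ∀ x y, D x y → add x y = one → y = compl x
  /-- (E4) -/
  E4 : ∀ x, D x one → x = zero

/-- The induced order of an effect algebra: `a ≤ b` iff `a ⊕ c = b` for some `c`. -/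
def EffectAlgebra.le {E : Type*} (A : EffectAlgebra E) (a b : E) : Prop :=
  ∃ c, A.D a c ∧ A.add a c = b

/-- A lattice effect algebra: an effect algebra whose induced order is a lattice,
with meet `inf` and join `sup`. -/
structure LatticeEffectAlgebra (E : Type*) extends EffectAlgebra E where
  inf : E → E → E
  sup : E → E → E
  inf_le_left : ∀ a b, toEffectAlgebra.le (inf a b) a
  inf_le_right : ∀ a b, toEffectAlgebra.le (inf a b) b
  le_inf : ∀ a b c, toEffectAlgebra.le c a → toEffectAlgebra.le c b →
    toEffectAlgebra.le c (inf a b)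
  le_sup_left : ∀ a b, toEffectAlgebra.le a (sup a b)
  le_sup_right : ∀ a b, toEffectAlgebra.le b (sup a b)
  sup_le : ∀ a b c, toEffectAlgebra.le a c → toEffectAlgebra.le b c →
    toEffectAlgebra.le (sup a b) c

/-- The total operation `x·y := ((x'∧y)⊕y')'` on a lattice effect algebra
(well defined since `x'∧y ≤ y`). -/
def LatticeEffectAlgebra.prod {E : Type*} (A : LatticeEffectAlgebra E) (x y : E) : E :=
  A.compl (A.add (A.inf (A.compl x) y) (A.compl y))

/-!
The operation satisfies `(x·c)'·c = x'∧c` and is monotone in `x`, so `x·c ≤ z'` implies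
`z·c ≤ (x·c)'·c ≤ x'`. Hence `x ↦ x·c` is self-adjoint with respect to the orthogonality `x ≤ z'`,
in particular a lower adjoint, and preserves binary joins. As `[(a·b')'·b']' = (a'∧b')' = a ∨ b`,
(NG7) is precisely the distributivity `(a ∨ b)·c = a·c ∨ b·c`.
-/

namespace EffectAlgebra

variable {E : Type*} (A : EffectAlgebra E) {x y z : E}

theorem D_symm (h : A.D x y) : A.D y x := (A.E1 x y h).1

theorem add_comm_of_D (h : A.D x y) : A.add x y = A.add y x := (A.E1 x y h).2

theorem add_right_comm_of_D (hxy : A.D x y) (hxyz : A.D (A.add x y) z) :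
    A.D (A.add x z) y ∧ A.add (A.add x y) z = A.add (A.add x z) y := by
  rw [A.add_comm_of_D hxy] at hxyz ⊢
  obtain ⟨-, hy, hassoc⟩ := A.E2 y x z (A.D_symm hxy) hxyz
  exact ⟨A.D_symm hy, hassoc.trans (A.add_comm_of_D hy)⟩

theorem compl_compl (x : E) : A.compl (A.compl x) = x := by
  have hD : A.D (A.compl x) x := A.D_symm (A.E3a x)
  exact (A.E3c _ _ hD ((A.add_comm_of_D hD).trans (A.E3b x))).symm

theorem D_and_add_compl_add (h : A.D x y) :
    A.D y (A.compl (A.add x y)) ∧ A.add y (A.compl (A.add x y)) = A.compl x := by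
  obtain ⟨hy, hx, hassoc⟩ := A.E2 x y _ h (A.E3a _)
  exact ⟨hy, A.E3c _ _ hx (hassoc.symm.trans (A.E3b _))⟩

theorem add_left_cancel_of_D (hy : A.D x y) (hz : A.D x z) (h : A.add x y = A.add x z) :
    y = z := by
  rw [A.add_comm_of_D hy, A.add_comm_of_D hz] at h
  rw [← A.compl_compl y, ← (A.D_and_add_compl_add (A.D_symm hy)).2, h,
    (A.D_and_add_compl_add (A.D_symm hz)).2, A.compl_compl]

theorem compl_one : A.compl A.one = A.zero := A.E4 _ (A.D_symm (A.E3a A.one))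

theorem D_zero_and_add_zero (x : E) : A.D x A.zero ∧ A.add x A.zero = x := by
  have hD : A.D (A.compl x) x := A.D_symm (A.E3a x)
  have hone : A.add (A.compl x) x = A.one := (A.add_comm_of_D hD).trans (A.E3b x)
  simpa only [hone, A.compl_one, A.compl_compl] using A.D_and_add_compl_add hD

theorem eq_zero_of_add_eq_zero (h : A.D x y) (hxy : A.add x y = A.zero) : y = A.zero := by
  have hone : A.D (A.add x y) A.one := hxy ▸ A.D_symm (A.D_zero_and_add_zero A.one).1
  exact A.E4 y (A.E2 x y _ h hone).1

theorem le_refl (x : E) : A.le x x := ⟨A.zero, A.D_zero_and_add_zero x⟩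

theorem le_trans (hxy : A.le x y) (hyz : A.le y z) : A.le x z := by
  obtain ⟨c, hc, rfl⟩ := hxy
  obtain ⟨d, hd, rfl⟩ := hyz
  obtain ⟨-, hD, hassoc⟩ := A.E2 _ _ _ hc hd
  exact ⟨_, hD, hassoc.symm⟩

theorem le_antisymm (hxy : A.le x y) (hyx : A.le y x) : x = y := by
  obtain ⟨c, hc, rfl⟩ := hxy
  obtain ⟨d, hd, h⟩ := hyx
  obtain ⟨hcd, hD, hassoc⟩ := A.E2 _ _ _ hc hd
  obtain ⟨hx, hx0⟩ := A.D_zero_and_add_zero x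
  have hcd0 : A.add c d = A.zero :=
    A.add_left_cancel_of_D hD hx (hassoc.symm.trans (h.trans hx0.symm))
  rw [A.eq_zero_of_add_eq_zero hcd hcd0, (A.D_zero_and_add_zero _).2] at h
  exact h.symm

theorem le_add_right_of_D (h : A.D x y) : A.le x (A.add x y) := ⟨y, h, rfl⟩

theorem add_le_add_right_of_D (hxy : A.le x y) (hD : A.D y z) :
    A.le (A.add x z) (A.add y z) := by
  obtain ⟨c, hc, rfl⟩ := hxy
  obtain ⟨hxz, hcomm⟩ := A.add_right_comm_of_D hc hD
  exact ⟨c, hxz, hcomm.symm⟩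

theorem D_iff_le_compl : A.D x y ↔ A.le x (A.compl y) := by
  constructor
  · exact fun h => ⟨_, A.D_and_add_compl_add (A.D_symm h)⟩
  · rintro ⟨c, hc, hy⟩
    have hD : A.D (A.add c x) y := by
      rw [← A.add_comm_of_D hc, hy]
      exact A.D_symm (A.E3a y)
    exact (A.E2 c x y (A.D_symm hc) hD).1

theorem D_compl_of_le (h : A.le x y) : A.D x (A.compl y) := by
  rwa [D_iff_le_compl, compl_compl]

theorem le_compl_comm : A.le x (A.compl y) ↔ A.le y (A.compl x) := by
  rw [← D_iff_le_compl, ← D_iff_le_compl]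
  exact ⟨A.D_symm, A.D_symm⟩

theorem compl_le_compl (h : A.le x y) : A.le (A.compl y) (A.compl x) := by
  rwa [A.le_compl_comm, A.compl_compl]

/-- The difference `x ⊖ y`, encoded as the total expression `(y ⊕ x')'`; it is meaningful only
when `y ≤ x`. -/
def sub (x y : E) : E := A.compl (A.add y (A.compl x))

theorem sub_le (h : A.le y x) : A.le (A.sub x y) x := by
  have hD : A.D (A.compl x) y := A.D_symm (A.D_compl_of_le h)
  have hle : A.le (A.compl x) (A.add y (A.compl x)) :=
    A.add_comm_of_D hD ▸ A.le_add_right_of_D hD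
  simpa only [sub, compl_compl] using A.compl_le_compl hle

theorem sub_le_sub_left (hyz : A.le y z) (hzx : A.le z x) :
    A.le (A.sub x z) (A.sub x y) :=
  A.compl_le_compl (A.add_le_add_right_of_D hyz (A.D_compl_of_le hzx))

theorem sub_sub_self (h : A.le y x) : A.sub x (A.sub x y) = y := by
  obtain ⟨hD, hadd⟩ := A.D_and_add_compl_add (A.D_compl_of_le h)
  rw [sub, sub, ← A.add_comm_of_D hD, hadd, compl_compl]

end EffectAlgebra

namespace LatticeEffectAlgebra

variable {E : Type*} (A : LatticeEffectAlgebra E) {x y : E}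

/-- The induced order of a lattice effect algebra as a Mathlib lattice. It is not an instance,
since `E` does not determine `A`. -/
abbrev toLattice : Lattice E where
  le := A.le
  le_refl := A.le_refl
  le_trans _ _ _ := A.le_trans
  le_antisymm _ _ := A.le_antisymm
  inf := A.inf
  inf_le_left := A.inf_le_left
  inf_le_right := A.inf_le_right
  le_inf a b c := A.le_inf b c a
  sup := A.sup
  le_sup_left := A.le_sup_left
  le_sup_right := A.le_sup_right
  sup_le := A.sup_le

theorem compl_inf_compl (x y : E) :
    A.compl (A.inf (A.compl x) (A.compl y)) = A.sup x y := by
  apply A.le_antisymm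
  · have hle : A.le (A.compl (A.sup x y)) (A.inf (A.compl x) (A.compl y)) :=
      A.le_inf _ _ _ (A.compl_le_compl (A.le_sup_left x y))
        (A.compl_le_compl (A.le_sup_right x y))
    simpa only [A.compl_compl] using A.compl_le_compl hle
  · exact A.sup_le _ _ _ (A.le_compl_comm.1 (A.inf_le_left _ _))
      (A.le_compl_comm.1 (A.inf_le_right _ _))

theorem prod_eq_sub (x c : E) : A.prod x c = A.sub c (A.inf (A.compl x) c) := rfl

theorem prod_le_right (x c : E) : A.le (A.prod x c) c := A.sub_le (A.inf_le_right _ _)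

theorem prod_le_prod_right (h : A.le x y) (c : E) : A.le (A.prod x c) (A.prod y c) := by
  let := A.toLattice
  exact A.sub_le_sub_left (inf_le_inf_right c (A.compl_le_compl h)) (A.inf_le_right _ _)

theorem prod_compl_prod (x c : E) :
    A.prod (A.compl (A.prod x c)) c = A.inf (A.compl x) c := by
  let := A.toLattice
  have hinf : A.inf (A.prod x c) c = A.prod x c := inf_eq_left.2 (A.prod_le_right x c)
  rw [prod_eq_sub, A.compl_compl, hinf, prod_eq_sub, A.sub_sub_self (A.inf_le_right _ _)]

theorem prod_le_compl_comm {c : E} :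
    A.le (A.prod x c) (A.compl y) ↔ A.le (A.prod y c) (A.compl x) := by
  suffices himp : ∀ {x y : E}, A.le (A.prod x c) (A.compl y) → A.le (A.prod y c) (A.compl x) from
    ⟨himp, himp⟩
  intro x y h
  have hle : A.le (A.prod y c) (A.prod (A.compl (A.prod x c)) c) :=
    A.prod_le_prod_right (A.le_compl_comm.1 h) c
  rw [prod_compl_prod] at hle
  exact A.le_trans hle (A.inf_le_left _ _)

theorem gc_prod (c : E) :
    letI := A.toLattice
    GaloisConnection (A.prod · c) (fun z => A.compl (A.prod (A.compl z) c)) := by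
  intro x z
  change A.le (A.prod x c) z ↔ A.le x (A.compl (A.prod (A.compl z) c))
  rw [A.le_compl_comm, A.prod_le_compl_comm, A.compl_compl]

theorem sup_prod (x y c : E) :
    A.prod (A.sup x y) c = A.sup (A.prod x c) (A.prod y c) :=
  letI := A.toLattice
  (A.gc_prod c).l_sup

end LatticeEffectAlgebra

/-- (NG7) holds in `(E;·,',0,1)` for a lattice effect algebra `E` with
`x·y := ((x'∧y)⊕y')'`: `[(a·b')'·b']'·c = [((a·c)·(b·c)')'·(b·c)']'`. -/
theorem ng7_holds {E : Type*} (A : LatticeEffectAlgebra E) (a b c : E) :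
    A.prod (A.compl (A.prod (A.compl (A.prod a (A.compl b))) (A.compl b))) c =
    A.compl (A.prod (A.compl (A.prod (A.prod a c) (A.compl (A.prod b c))))
      (A.compl (A.prod b c))) := by
  rw [A.prod_compl_prod, A.prod_compl_prod, A.compl_inf_compl, A.compl_inf_compl, A.sup_prod]
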